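/- Let g > 0. Define E(x,y) = exp(1 − x² − y²), η(x,y) = −E(x,y)²/(4g), u(x,y) = y·E(x,y), v(x,y) = −x·E(x,y), h0(x,y) = −(1/5)·exp((1 − x² − y²)/2), and h(x,y) = h0(x,y) + η(x,y). Then for every (x,y) ∈ ℝ²: (i) ∂x(h u)(x,y) + ∂y(h v)(x,y) = 0; (ii) u(x,y) ∂x u(x,y) + v(x,y) ∂y u(x,y) + g ∂x η(x,y) = 0; (iii) u(x,y) ∂x v(x,y) + v(x,y) ∂y v(x,y) + g ∂y η(x,y) = 0. Consequently the time-independent fields (η, u, v) constitute an exact steady solution of the two-dimensional nonlinear shallow water equations with bathymetry h0 and no seafloor motion. -/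

import Mathlib

/-!
The vortex velocity `(u, v) = E · (y, -x)` is tangent to the circles centred at the origin, while
`E`, `h0` and `η` are radial, with gradients `-2E · (x, y)`, `-h0 · (x, y)` and `-4η · (x, y)`.
The mass flux is `F · (y, -x)` with `F = hE` radial, hence divergence free. The advective
acceleration is the centripetal one, `-E² · (x, y)`, and it is balanced by the pressure gradient
`g ∇η = E² · (x, y)`; this is what fixes the constant `1 / (4g)` in `η`.

The lemmas below record the partial derivatives as `HasDerivAt` facts, so the differentiability
needed for `pdX` and `pdY` to be genuine derivatives is part of the proof.
-/

/-- Partial derivative with respect to the first variable `x` of a function of `(x, y)`. -/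
noncomputable def pdX (f : ℝ × ℝ → ℝ) (p : ℝ × ℝ) : ℝ :=
  deriv (fun x => f (x, p.2)) p.1

/-- Partial derivative with respect to the second variable `y` of a function of `(x, y)`. -/
noncomputable def pdY (f : ℝ × ℝ → ℝ) (p : ℝ × ℝ) : ℝ :=
  deriv (fun y => f (p.1, y)) p.2

/-- `E(x,y) = exp(1 − x² − y²)`. -/
noncomputable def vortexE (p : ℝ × ℝ) : ℝ := Real.exp (1 - p.1 ^ 2 - p.2 ^ 2)

/-- Free surface `η(x,y) = −E(x,y)²/(4g)`. -/
noncomputable def vortexEta (g : ℝ) (p : ℝ × ℝ) : ℝ := -(vortexE p) ^ 2 / (4 * g)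

/-- Velocity `u(x,y) = y E(x,y)`. -/
noncomputable def vortexU (p : ℝ × ℝ) : ℝ := p.2 * vortexE p

/-- Velocity `v(x,y) = −x E(x,y)`. -/
noncomputable def vortexV (p : ℝ × ℝ) : ℝ := -p.1 * vortexE p

/-- Still water depth `h0(x,y) = −(1/5) exp((1 − x² − y²)/2)`. -/
noncomputable def vortexH0 (p : ℝ × ℝ) : ℝ :=
  -(1 / 5) * Real.exp ((1 - p.1 ^ 2 - p.2 ^ 2) / 2)

/-- Total water depth `h = h0 + η`. -/
noncomputable def vortexH (g : ℝ) (p : ℝ × ℝ) : ℝ := vortexH0 p + vortexEta g p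

lemma vortexE_hasDerivAt_x (x y : ℝ) :
    HasDerivAt (fun t => vortexE (t, y)) (-2 * x * vortexE (x, y)) x := by
  have h := (((hasDerivAt_pow 2 x).const_sub 1).sub_const (y ^ 2)).exp
  refine h.congr_deriv ?_
  simp only [vortexE]
  push_cast
  ring

lemma vortexE_hasDerivAt_y (x y : ℝ) :
    HasDerivAt (fun t => vortexE (x, t)) (-2 * y * vortexE (x, y)) y := by
  have h := ((hasDerivAt_pow 2 y).const_sub (1 - x ^ 2)).exp
  refine h.congr_deriv ?_
  simp only [vortexE]
  push_cast
  ring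

lemma vortexH0_hasDerivAt_x (x y : ℝ) :
    HasDerivAt (fun t => vortexH0 (t, y)) (-x * vortexH0 (x, y)) x := by
  have h := ((((hasDerivAt_pow 2 x).const_sub 1).sub_const (y ^ 2)).div_const 2).exp.const_mul
    (-(1 / 5 : ℝ))
  refine h.congr_deriv ?_
  simp only [vortexH0]
  push_cast
  ring

lemma vortexH0_hasDerivAt_y (x y : ℝ) :
    HasDerivAt (fun t => vortexH0 (x, t)) (-y * vortexH0 (x, y)) y := by
  have h := (((hasDerivAt_pow 2 y).const_sub (1 - x ^ 2)).div_const 2).exp.const_mul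
    (-(1 / 5 : ℝ))
  refine h.congr_deriv ?_
  simp only [vortexH0]
  push_cast
  ring

lemma vortexEta_hasDerivAt_x (g x y : ℝ) :
    HasDerivAt (fun t => vortexEta g (t, y)) (-4 * x * vortexEta g (x, y)) x := by
  have h := ((vortexE_hasDerivAt_x x y).pow 2).neg.div_const (4 * g)
  refine h.congr_deriv ?_
  simp only [vortexEta]
  push_cast
  ring

lemma vortexEta_hasDerivAt_y (g x y : ℝ) :
    HasDerivAt (fun t => vortexEta g (x, t)) (-4 * y * vortexEta g (x, y)) y := by
  have h := ((vortexE_hasDerivAt_y x y).pow 2).neg.div_const (4 * g)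
  refine h.congr_deriv ?_
  simp only [vortexEta]
  push_cast
  ring

lemma vortexU_hasDerivAt_x (x y : ℝ) :
    HasDerivAt (fun t => vortexU (t, y)) (-2 * x * y * vortexE (x, y)) x := by
  have h := (vortexE_hasDerivAt_x x y).const_mul y
  refine h.congr_deriv ?_
  ring

lemma vortexU_hasDerivAt_y (x y : ℝ) :
    HasDerivAt (fun t => vortexU (x, t)) ((1 - 2 * y ^ 2) * vortexE (x, y)) y := by
  have h := (hasDerivAt_id y).mul (vortexE_hasDerivAt_y x y)
  refine h.congr_deriv ?_
  simp only [id_eq]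
  ring

lemma vortexV_hasDerivAt_x (x y : ℝ) :
    HasDerivAt (fun t => vortexV (t, y)) ((2 * x ^ 2 - 1) * vortexE (x, y)) x := by
  have h := (hasDerivAt_id x).neg.mul (vortexE_hasDerivAt_x x y)
  refine h.congr_deriv ?_
  simp only [Pi.neg_apply, id_eq]
  ring

lemma vortexV_hasDerivAt_y (x y : ℝ) :
    HasDerivAt (fun t => vortexV (x, t)) (2 * x * y * vortexE (x, y)) y := by
  have h := (vortexE_hasDerivAt_y x y).const_mul (-x)
  refine h.congr_deriv ?_
  ring

/-- The steady vortex fields constitute an exact steady solution of the 2D nonlinear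
shallow water equations: the mass equation and both momentum equations hold pointwise. -/
theorem steady_vortex_exact_solution (g : ℝ) (hg : 0 < g) (p : ℝ × ℝ) :
    pdX (fun q => vortexH g q * vortexU q) p
        + pdY (fun q => vortexH g q * vortexV q) p = 0 ∧
    vortexU p * pdX vortexU p + vortexV p * pdY vortexU p
        + g * pdX (vortexEta g) p = 0 ∧
    vortexU p * pdX vortexV p + vortexV p * pdY vortexV p
        + g * pdY (vortexEta g) p = 0 := by
  obtain ⟨x, y⟩ := p
  have hHx := (vortexH0_hasDerivAt_x x y).add (vortexEta_hasDerivAt_x g x y)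
  have hHy := (vortexH0_hasDerivAt_y x y).add (vortexEta_hasDerivAt_y g x y)
  have hMx : pdX (fun q => vortexH g q * vortexU q) (x, y) = _ :=
    (hHx.mul (vortexU_hasDerivAt_x x y)).deriv
  have hMy : pdY (fun q => vortexH g q * vortexV q) (x, y) = _ :=
    (hHy.mul (vortexV_hasDerivAt_y x y)).deriv
  have hUx : pdX vortexU (x, y) = _ := (vortexU_hasDerivAt_x x y).deriv
  have hUy : pdY vortexU (x, y) = _ := (vortexU_hasDerivAt_y x y).deriv
  have hVx : pdX vortexV (x, y) = _ := (vortexV_hasDerivAt_x x y).deriv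
  have hVy : pdY vortexV (x, y) = _ := (vortexV_hasDerivAt_y x y).deriv
  have hEx : pdX (vortexEta g) (x, y) = _ := (vortexEta_hasDerivAt_x g x y).deriv
  have hEy : pdY (vortexEta g) (x, y) = _ := (vortexEta_hasDerivAt_y g x y).deriv
  have hη : g * vortexEta g (x, y) = -(vortexE (x, y)) ^ 2 / 4 := by
    simp only [vortexEta]
    field_simp
  refine ⟨?_, ?_, ?_⟩
  · rw [hMx, hMy]
    simp only [Pi.add_apply, vortexU, vortexV]
    ring
  · rw [hUx, hUy, hEx]
    simp only [vortexU, vortexV]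
    linear_combination (-4 * x) * hη
  · rw [hVx, hVy, hEy]
    simp only [vortexU, vortexV]
    linear_combination (-4 * y) * hη
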